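/- The matrices A₂ and B₂ lie in SL(2,ℂ), i.e., det A₂ = 1 and det B₂ = 1, and they satisfy A₂⁵ = B₂³ = (A₂B₂)² = −I, where I is the 2×2 identity matrix. Consequently, sending r ↦ A₂ and s ↦ B₂ defines a homomorphism σ₂ from the binary icosahedral group G = ⟨r, s ∣ r⁵ = s³ = (rs)²⟩ into SL(2,ℂ). -/

import Mathlib

noncomputable section

/-- `e₅ = exp(2πi/5)`. -/
def e5 : ℂ := Complex.exp (2 * Real.pi * Complex.I / 5)

/-- The matrix `A₂`, image of the generator `r` under the representation `σ₂`. -/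
def A2 : Matrix (Fin 2) (Fin 2) ℂ :=
  !![e5 - e5^2, -e5^2 - e5^4;
     -e5 - e5^4, -e5 - e5^3]

/-- The matrix `B₂`, image of the generator `s` under the representation `σ₂`. -/
def B2 : Matrix (Fin 2) (Fin 2) ℂ :=
  !![1, -e5^3;
     e5^2, 0]

/-- Relators `r⁵((rs)²)⁻¹` and `s³((rs)²)⁻¹` of the binary icosahedral group
`⟨r, s ∣ r⁵ = s³ = (rs)²⟩`, with `r = of 0` and `s = of 1`. -/
def icosRels : Set (FreeGroup (Fin 2)) :=
  {FreeGroup.of 0 ^ 5 * ((FreeGroup.of 0 * FreeGroup.of 1) ^ 2)⁻¹,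
   FreeGroup.of 1 ^ 3 * ((FreeGroup.of 0 * FreeGroup.of 1) ^ 2)⁻¹}

/-!
A `2 × 2` matrix `M` of determinant one satisfies `M² = tr M • M - 1` by Cayley–Hamilton, so its
powers are controlled by its trace: trace `0` gives `M² = -1`, trace `1` gives `M³ = -1`, and a
trace `t` with `t² = t + 1` (over `ℂ`, the golden ratio or its conjugate) gives `M⁵ = -1`.
The traces of `A₂ B₂`, `B₂` and `A₂` are of these three kinds, by the relation
`1 + e₅ + e₅² + e₅³ + e₅⁴ = 0`.
-/

section CayleyHamilton

variable {R S : Type*} [CommRing R] [Ring S]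

theorem sq_eq_trace_smul_sub_det_smul_one (M : Matrix (Fin 2) (Fin 2) R) :
    M ^ 2 = M.trace • M - M.det • (1 : Matrix (Fin 2) (Fin 2) R) := by
  nontriviality R
  have h := M.aeval_self_charpoly
  simp only [Matrix.charpoly_fin_two, map_add, map_sub, map_mul, map_pow, Polynomial.aeval_X,
    Polynomial.aeval_C, Algebra.algebraMap_eq_smul_one, smul_one_mul] at h
  rw [← sub_eq_zero, ← h]
  abel

theorem sq_eq_trace_smul_sub_one_of_det_eq_one {M : Matrix (Fin 2) (Fin 2) R} (hM : M.det = 1) :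
    M ^ 2 = M.trace • M - 1 := by
  rw [sq_eq_trace_smul_sub_det_smul_one, hM, one_smul]

theorem pow_three_eq_neg_one_of_sq_eq_sub_one {x : S} (hx : x ^ 2 = x - 1) : x ^ 3 = -1 := by
  rw [pow_succ, hx, sub_mul, one_mul, ← sq, hx, sub_sub_cancel_left]

theorem pow_five_eq_neg_one_of_sq_eq_smul_sub_one [Algebra R S] {x : S} {t : R}
    (hx : x ^ 2 = t • x - 1) (ht : t ^ 2 = t + 1) : x ^ 5 = -1 := by
  have hx₃ : x ^ 3 = t • x - t • 1 := by
    calc x ^ 3 = t • x ^ 2 - x := by rw [pow_succ, hx, sub_mul, one_mul, smul_mul_assoc, ← sq, hx]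
      _ = t ^ 2 • x - t • 1 - x := by rw [hx, smul_sub, smul_smul, ← sq]
      _ = t • x - t • 1 := by rw [ht]; module
  calc x ^ 5 = x ^ 3 * x ^ 2 := by rw [← pow_add]
    _ = t • x ^ 3 - t • x ^ 2 := by
      rw [hx₃, sub_mul, smul_mul_assoc, smul_mul_assoc, one_mul, ← pow_succ', hx₃]
    _ = (t - t ^ 2) • 1 := by rw [hx₃, hx]; module
    _ = -1 := by rw [ht]; module

end CayleyHamilton

section IcosahedralMatrices

variable {R : Type*} [CommRing R]

/-- The matrix `A₂` with an arbitrary ring element `ζ` in place of `e₅`. -/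
def icosA (ζ : R) : Matrix (Fin 2) (Fin 2) R :=
  !![ζ - ζ ^ 2, -ζ ^ 2 - ζ ^ 4;
     -ζ - ζ ^ 4, -ζ - ζ ^ 3]

/-- The matrix `B₂` with an arbitrary ring element `ζ` in place of `e₅`. -/
def icosB (ζ : R) : Matrix (Fin 2) (Fin 2) R :=
  !![1, -ζ ^ 3;
     ζ ^ 2, 0]

theorem trace_icosA (ζ : R) : (icosA ζ).trace = -ζ ^ 2 - ζ ^ 3 := by
  rw [icosA, Matrix.trace_fin_two_of]
  ring

theorem trace_icosB (ζ : R) : (icosB ζ).trace = 1 := by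
  rw [icosB, Matrix.trace_fin_two_of, add_zero]

theorem det_icosB (ζ : R) : (icosB ζ).det = ζ ^ 5 := by
  rw [icosB, Matrix.det_fin_two_of]
  ring

theorem trace_icosA_mul_icosB (ζ : R) :
    (icosA ζ * icosB ζ).trace = (ζ ^ 2 - ζ) * (ζ ^ 5 - 1) := by
  rw [icosA, icosB, Matrix.mul_fin_two, Matrix.trace_fin_two_of]
  ring

variable {ζ : R} (hζ : 1 + ζ + ζ ^ 2 + ζ ^ 3 + ζ ^ 4 = 0)
include hζ

theorem pow_five_eq_one_of_cyclotomic : ζ ^ 5 = 1 := by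
  linear_combination (ζ - 1) * hζ

theorem det_icosA_eq_one : (icosA ζ).det = 1 := by
  have hζ₅ := pow_five_eq_one_of_cyclotomic hζ
  rw [icosA, Matrix.det_fin_two_of]
  linear_combination -hζ - (ζ + ζ ^ 3) * hζ₅

theorem det_icosB_eq_one : (icosB ζ).det = 1 := by
  rw [det_icosB, pow_five_eq_one_of_cyclotomic hζ]

theorem trace_icosA_sq : (icosA ζ).trace ^ 2 = (icosA ζ).trace + 1 := by
  have hζ₅ := pow_five_eq_one_of_cyclotomic hζ
  rw [trace_icosA]
  linear_combination hζ + (2 + ζ) * hζ₅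

theorem icosA_pow_five : icosA ζ ^ 5 = -1 :=
  pow_five_eq_neg_one_of_sq_eq_smul_sub_one
    (sq_eq_trace_smul_sub_one_of_det_eq_one (det_icosA_eq_one hζ)) (trace_icosA_sq hζ)

theorem icosB_pow_three : icosB ζ ^ 3 = -1 := by
  apply pow_three_eq_neg_one_of_sq_eq_sub_one
  rw [sq_eq_trace_smul_sub_one_of_det_eq_one (det_icosB_eq_one hζ), trace_icosB, one_smul]

theorem icosA_mul_icosB_sq : (icosA ζ * icosB ζ) ^ 2 = -1 := by
  have hdet : (icosA ζ * icosB ζ).det = 1 := by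
    rw [Matrix.det_mul, det_icosA_eq_one hζ, det_icosB_eq_one hζ, one_mul]
  have htrace : (icosA ζ * icosB ζ).trace = 0 := by
    rw [trace_icosA_mul_icosB, pow_five_eq_one_of_cyclotomic hζ, sub_self, mul_zero]
  rw [sq_eq_trace_smul_sub_one_of_det_eq_one hdet, htrace, zero_smul, zero_sub]

end IcosahedralMatrices

section Presentation

variable {H : Type*} [Group H] {x y : H} (hx : x ^ 5 = (x * y) ^ 2) (hy : y ^ 3 = (x * y) ^ 2)

/-- The universal property of the binary icosahedral group: the homomorphism to `H` with `r ↦ x`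
and `s ↦ y`, for elements `x` and `y` that satisfy the defining relations. -/
def icosLift : PresentedGroup icosRels →* H :=
  PresentedGroup.toGroup (f := ![x, y]) <| by
    rintro _ (rfl | rfl) <;> simp [hx, hy]

theorem icosLift_of_zero : icosLift hx hy (PresentedGroup.of 0) = x :=
  PresentedGroup.toGroup.of _

theorem icosLift_of_one : icosLift hx hy (PresentedGroup.of 1) = y :=
  PresentedGroup.toGroup.of _

end Presentation

theorem sigma2_representation_general {R : Type*} [CommRing R] {ζ : R}
    (hζ : 1 + ζ + ζ ^ 2 + ζ ^ 3 + ζ ^ 4 = 0) :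
    (icosA ζ).det = 1 ∧ (icosB ζ).det = 1 ∧
    icosA ζ ^ 5 = -1 ∧ icosB ζ ^ 3 = -1 ∧ (icosA ζ * icosB ζ) ^ 2 = -1 ∧
    ∃ σ : PresentedGroup icosRels →* Matrix.SpecialLinearGroup (Fin 2) R,
      (σ (PresentedGroup.of 0) : Matrix (Fin 2) (Fin 2) R) = icosA ζ ∧
      (σ (PresentedGroup.of 1) : Matrix (Fin 2) (Fin 2) R) = icosB ζ := by
  refine ⟨det_icosA_eq_one hζ, det_icosB_eq_one hζ, icosA_pow_five hζ, icosB_pow_three hζ,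
    icosA_mul_icosB_sq hζ, ?_⟩
  let a : Matrix.SpecialLinearGroup (Fin 2) R := ⟨icosA ζ, det_icosA_eq_one hζ⟩
  let b : Matrix.SpecialLinearGroup (Fin 2) R := ⟨icosB ζ, det_icosB_eq_one hζ⟩
  have ha : a ^ 5 = (a * b) ^ 2 :=
    Subtype.ext ((icosA_pow_five hζ).trans (icosA_mul_icosB_sq hζ).symm)
  have hb : b ^ 3 = (a * b) ^ 2 :=
    Subtype.ext ((icosB_pow_three hζ).trans (icosA_mul_icosB_sq hζ).symm)
  exact ⟨icosLift ha hb, congrArg _ (icosLift_of_zero ha hb), congrArg _ (icosLift_of_one ha hb)⟩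

theorem isPrimitiveRoot_e5 : IsPrimitiveRoot e5 5 :=
  Complex.isPrimitiveRoot_exp 5 (by norm_num)

theorem cyclotomic_relation_e5 : 1 + e5 + e5 ^ 2 + e5 ^ 3 + e5 ^ 4 = 0 := by
  simpa [Finset.sum_range_succ] using isPrimitiveRoot_e5.geom_sum_eq_zero (by norm_num)

/-- `A₂, B₂ ∈ SL(2,ℂ)`, they satisfy `A₂⁵ = B₂³ = (A₂B₂)² = -I`, and
consequently `r ↦ A₂`, `s ↦ B₂` defines a homomorphism `σ₂` from the binary icosahedral
group `G = ⟨r, s ∣ r⁵ = s³ = (rs)²⟩` into `SL(2,ℂ)`. -/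
theorem sigma2_representation :
    A2.det = 1 ∧ B2.det = 1 ∧
    A2 ^ 5 = -(1 : Matrix (Fin 2) (Fin 2) ℂ) ∧
    B2 ^ 3 = -(1 : Matrix (Fin 2) (Fin 2) ℂ) ∧
    (A2 * B2) ^ 2 = -(1 : Matrix (Fin 2) (Fin 2) ℂ) ∧
    ∃ σ : PresentedGroup icosRels →* Matrix.SpecialLinearGroup (Fin 2) ℂ,
      ((σ (PresentedGroup.of 0) : Matrix.SpecialLinearGroup (Fin 2) ℂ) :
          Matrix (Fin 2) (Fin 2) ℂ) = A2 ∧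
      ((σ (PresentedGroup.of 1) : Matrix.SpecialLinearGroup (Fin 2) ℂ) :
          Matrix (Fin 2) (Fin 2) ℂ) = B2 :=
  sigma2_representation_general cyclotomic_relation_e5

end
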